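/- Let d ≥ 1, let f, g : ℝ^d → ℝ^d satisfy f(0) = g(0) = 0 and the local Lipschitz condition with nondecreasing constants L_R, let p ∈ (0,1) and λ > 0 be such that Φ_{f,g}(x) ≤ −λ for all x ≠ 0, and let h : (0,Δ₀] → (0,∞) be decreasing with h(Δ) → ∞ and L_{h(Δ)}⁴·Δ → 0 as Δ → 0⁺. Then for every ε ∈ (0,λ) there exists Δ* ∈ (0,Δ₀] such that for every Δ ∈ (0,Δ*) and every x₀ ∈ ℝ^d, the modified truncated Euler–Maruyama scheme X₀ = x₀, X_{k+1} = X_k + f_{h(Δ)}(X_k)·Δ + g_{h(Δ)}(X_k)·ξ_k driven by i.i.d. real Gaussian random variables with mean 0 and variance Δ is almost surely exponentially stable: limsup_{k→∞} (log|X_k|)/(kΔ) ≤ −(λ−ε) almost surely. -/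

import Mathlib

open scoped Classical

open Set Filter MeasureTheory ProbabilityTheory
open scoped RealInnerProductSpace ENNReal

/-- The modified truncated function `f_h`. -/
noncomputable def trunc {d : ℕ} (f : EuclideanSpace ℝ (Fin d) → EuclideanSpace ℝ (Fin d))
    (h : ℝ) (x : EuclideanSpace ℝ (Fin d)) : EuclideanSpace ℝ (Fin d) :=
  if ‖x‖ ≤ h then f x else (‖x‖ / h) • f ((h / ‖x‖) • x)

/-- The dissipativity functional `Φ_{f,g}`. -/
noncomputable def Phi {d : ℕ} (f g : EuclideanSpace ℝ (Fin d) → EuclideanSpace ℝ (Fin d))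
    (p : ℝ) (x : EuclideanSpace ℝ (Fin d)) : ℝ :=
  (⟪x, f x⟫ + (1 / 2) * ‖g x‖ ^ 2) / ‖x‖ ^ 2 + ((p - 2) / 2) * ⟪x, g x⟫ ^ 2 / ‖x‖ ^ 4

/-!
The truncated coefficients are the radially homogeneous extensions of `f` and `g` off the ball of
radius `h(Δ)`. The linear growth bound with constant `H = max (L_{h(Δ)}) 1` and the bound
`Φ ≤ -λ` are both invariant under scaling, so they hold globally for the truncated coefficients.

By homogeneity one step of the scheme may be analysed from a unit vector `e`. There `|X₁|² - 1` is
a quadratic polynomial in the Gaussian increment, and `(1 + y)^(p/2)` lies below its cubic Taylor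
polynomial at `0`. Computing the first three moments of that quadratic (Gaussian moments up to
order six) turns the first-order terms into `p Δ Φ`, with an error `70 p Δ (H⁴ Δ)`, whence
`E|X_{k+1}|^p ≤ (1 - p Δ (λ - 70 H⁴ Δ)) E|X_k|^p`. Once `70 H⁴ Δ < ε`, the expectations of
`(e^{(λ-ε)kΔ} |X_k|)^p` are summable, so almost surely these variables tend to `0`.
-/

section RpowTaylor

lemma one_add_mul_sub_one_le_rpow_of_nonpos {b t : ℝ} (hb : b ≤ 0) (ht : 0 < t) :
    1 + b * (t - 1) ≤ t ^ b :=
  calc 1 + b * (t - 1) ≤ Real.log t * b + 1 := by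
        nlinarith [Real.log_le_sub_one_of_pos ht]
    _ ≤ Real.exp (Real.log t * b) := Real.add_one_le_exp _
    _ = t ^ b := (Real.rpow_def_of_pos ht b).symm

/-- The cubic Taylor polynomial of `t ↦ t ^ a` at `1`, minus the function itself; it is convex with
a critical point at `1`, hence nonnegative. -/
noncomputable def cubicTaylorGap (a t : ℝ) : ℝ :=
  1 + a * (t - 1) + a * (a - 1) / 2 * (t - 1) ^ 2
    + a * (a - 1) * (a - 2) / 6 * (t - 1) ^ 3 - t ^ a

variable {a t : ℝ}

lemma hasDerivAt_cubicTaylorGap (ht : 0 < t) :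
    HasDerivAt (cubicTaylorGap a)
      (a + a * (a - 1) * (t - 1) + a * (a - 1) * (a - 2) / 2 * (t - 1) ^ 2
        - a * t ^ (a - 1)) t := by
  have hsub : HasDerivAt (fun s : ℝ => s - 1) 1 t := (hasDerivAt_id t).sub_const 1
  refine (((((hasDerivAt_const t (1 : ℝ)).add (hsub.const_mul a)).add
    ((hsub.pow 2).const_mul (a * (a - 1) / 2))).add
    ((hsub.pow 3).const_mul (a * (a - 1) * (a - 2) / 6))).sub
    (Real.hasDerivAt_rpow_const (p := a) (Or.inl ht.ne'))).congr_deriv ?_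
  norm_num
  ring

lemma hasDerivAt_deriv_cubicTaylorGap (ht : 0 < t) :
    HasDerivAt (fun s : ℝ => a + a * (a - 1) * (s - 1) + a * (a - 1) * (a - 2) / 2 * (s - 1) ^ 2
        - a * s ^ (a - 1))
      (a * (a - 1) * (1 + (a - 2) * (t - 1) - t ^ (a - 2))) t := by
  have hsub : HasDerivAt (fun s : ℝ => s - 1) 1 t := (hasDerivAt_id t).sub_const 1
  refine ((((hasDerivAt_const t a).add (hsub.const_mul (a * (a - 1)))).add
    ((hsub.pow 2).const_mul (a * (a - 1) * (a - 2) / 2))).sub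
    ((Real.hasDerivAt_rpow_const (p := a - 1) (Or.inl ht.ne')).const_mul a)).congr_deriv ?_
  rw [show a - 1 - 1 = a - 2 by ring]
  norm_num
  ring

lemma convexOn_cubicTaylorGap (ha₀ : 0 ≤ a) (ha₁ : a ≤ 1) :
    ConvexOn ℝ (Ici 0) (cubicTaylorGap a) := by
  have hcont : Continuous (cubicTaylorGap a) := by
    have := Real.continuous_rpow_const ha₀
    unfold cubicTaylorGap
    fun_prop
  refine convexOn_of_hasDerivWithinAt2_nonneg (convex_Ici 0) hcont.continuousOn
    (fun t ht => (hasDerivAt_cubicTaylorGap (interior_Ici.subset ht)).hasDerivWithinAt)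
    (fun t ht => (hasDerivAt_deriv_cubicTaylorGap (interior_Ici.subset ht)).hasDerivWithinAt)
    fun t ht => ?_
  have htangent : 1 + (a - 2) * (t - 1) ≤ t ^ (a - 2) :=
    one_add_mul_sub_one_le_rpow_of_nonpos (by linarith) (interior_Ici.subset ht)
  exact mul_nonneg_of_nonpos_of_nonpos (by nlinarith) (by linarith)

lemma cubicTaylorGap_nonneg (ha₀ : 0 ≤ a) (ha₁ : a ≤ 1) (ht : 0 ≤ t) :
    0 ≤ cubicTaylorGap a t := by
  have hmin : IsMinOn (cubicTaylorGap a) (Ici 0) 1 := by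
    refine (convexOn_cubicTaylorGap ha₀ ha₁).isMinOn_of_rightDeriv_eq_zero (by simp) ?_
    rw [(hasDerivAt_cubicTaylorGap one_pos).hasDerivWithinAt.derivWithin
      (uniqueDiffWithinAt_Ioi 1)]
    simp
  simpa [cubicTaylorGap] using hmin (mem_Ici.mpr ht)

lemma rpow_le_cubic_taylor (ha₀ : 0 ≤ a) (ha₁ : a ≤ 1) (ht : 0 ≤ t) :
    t ^ a ≤ 1 + a * (t - 1) + a * (a - 1) / 2 * (t - 1) ^ 2
      + a * (a - 1) * (a - 2) / 6 * (t - 1) ^ 3 :=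
  sub_nonneg.mp (cubicTaylorGap_nonneg ha₀ ha₁ ht)

lemma rpow_le_cubic_taylor_sq {p r : ℝ} (hp₀ : 0 ≤ p) (hp₂ : p ≤ 2) (hr : 0 ≤ r) :
    r ^ p ≤ 1 + p / 2 * (r ^ 2 - 1) + p / 2 * (p / 2 - 1) / 2 * (r ^ 2 - 1) ^ 2
      + p / 2 * (p / 2 - 1) * (p / 2 - 2) / 6 * (r ^ 2 - 1) ^ 3 := by
  have hsq : r ^ p = (r ^ 2) ^ (p / 2) := by
    rw [← Real.rpow_natCast, ← Real.rpow_mul hr]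
    norm_num [mul_div_cancel₀]
  rw [hsq]
  exact rpow_le_cubic_taylor (by positivity) (by linarith) (by positivity)

end RpowTaylor

section GaussianMoments

variable (v : NNReal)

lemma integrable_pow_gaussianReal (n : ℕ) :
    Integrable (fun x : ℝ => x ^ n) (gaussianReal 0 v) := by
  simpa using integrable_pow_of_mem_interior_integrableExpSet (X := id) (μ := gaussianReal 0 v)
    (by simp) n

lemma hasDerivAt_integral_pow_mul_exp_gaussianReal (n : ℕ) (t : ℝ) :
    HasDerivAt (fun s => ∫ x, x ^ n * Real.exp (s * x) ∂gaussianReal 0 v)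
      (∫ x, x ^ (n + 1) * Real.exp (t * x) ∂gaussianReal 0 v) t :=
  hasDerivAt_integral_pow_mul_exp_real (X := id) (by simp) n

lemma integral_mul_exp_gaussianReal (t : ℝ) :
    ∫ x, x ^ 1 * Real.exp (t * x) ∂gaussianReal 0 v
      = v * t * ∫ x, x ^ 0 * Real.exp (t * x) ∂gaussianReal 0 v := by
  have hmgf (s : ℝ) : ∫ x, x ^ 0 * Real.exp (s * x) ∂gaussianReal 0 v
      = Real.exp (v * s ^ 2 / 2) := by
    simpa [mgf] using congrFun (mgf_id_gaussianReal (μ := 0) (v := v)) s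
  have hderiv : HasDerivAt (fun s : ℝ => Real.exp (v * s ^ 2 / 2))
      (Real.exp (v * t ^ 2 / 2) * (v * t)) t := by
    refine HasDerivAt.exp (((hasDerivAt_pow 2 t).const_mul (v : ℝ)).div_const 2 |>.congr_deriv ?_)
    norm_num
    ring
  have hderiv' := hasDerivAt_integral_pow_mul_exp_gaussianReal v 0 t
  simp only [hmgf] at hderiv'
  rw [hderiv'.unique hderiv, hmgf, mul_comm]

-- Differentiating the recursion for `n` in `t` gives the recursion for `n + 1`.
lemma integral_pow_add_two_mul_exp_gaussianReal (n : ℕ) (t : ℝ) :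
    ∫ x, x ^ (n + 2) * Real.exp (t * x) ∂gaussianReal 0 v
      = v * t * ∫ x, x ^ (n + 1) * Real.exp (t * x) ∂gaussianReal 0 v
        + (n + 1) * v * ∫ x, x ^ n * Real.exp (t * x) ∂gaussianReal 0 v := by
  have hderiv := hasDerivAt_integral_pow_mul_exp_gaussianReal v
  have hlin (t : ℝ) : HasDerivAt (fun s : ℝ => v * s) v t := by
    simpa using (hasDerivAt_id t).const_mul (v : ℝ)
  induction n generalizing t with
  | zero =>
    have := hderiv 1 t
    simp only [integral_mul_exp_gaussianReal] at this
    rw [this.unique ((hlin t).mul (hderiv 0 t))]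
    push_cast
    ring
  | succ n ih =>
    have := hderiv (n + 2) t
    simp only [ih] at this
    rw [this.unique (((hlin t).mul (hderiv (n + 1) t)).add ((hderiv n t).const_mul _))]
    push_cast
    ring

lemma integral_pow_add_two_gaussianReal (n : ℕ) :
    ∫ x, x ^ (n + 2) ∂gaussianReal 0 v = (n + 1) * v * ∫ x, x ^ n ∂gaussianReal 0 v := by
  simpa using integral_pow_add_two_mul_exp_gaussianReal v n 0

lemma integrable_polynomial_eval_gaussianReal (P : Polynomial ℝ) :
    Integrable (fun x => P.eval x) (gaussianReal 0 v) := by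
  simp only [Polynomial.eval_eq_sum_range]
  exact integrable_finsetSum _ fun n _ => (integrable_pow_gaussianReal v n).const_mul _

lemma integrable_quadratic_pow_gaussianReal (A B C : ℝ) (n : ℕ) :
    Integrable (fun x => (A + B * x + C * x ^ 2) ^ n) (gaussianReal 0 v) := by
  have := integrable_polynomial_eval_gaussianReal v ((.C A + .C B * .X + .C C * .X ^ 2) ^ n)
  simpa using this

lemma integral_sextic_gaussianReal (c₀ c₁ c₂ c₃ c₄ c₅ c₆ : ℝ) :
    ∫ x, (c₀ + c₁ * x + c₂ * x ^ 2 + c₃ * x ^ 3 + c₄ * x ^ 4 + c₅ * x ^ 5 + c₆ * x ^ 6)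
        ∂gaussianReal 0 v
      = c₀ + c₂ * v + c₄ * (3 * v ^ 2) + c₆ * (15 * v ^ 3) := by
  have hint (c : ℝ) (n : ℕ) : Integrable (fun x : ℝ => c * x ^ n) (gaussianReal 0 v) :=
    (integrable_pow_gaussianReal v n).const_mul c
  have hint₁ (c : ℝ) : Integrable (fun x : ℝ => c * x) (gaussianReal 0 v) := by
    simpa using hint c 1
  have hmean : ∫ x, c₁ * x ∂gaussianReal 0 v = 0 := by
    rw [integral_const_mul, integral_id_gaussianReal, mul_zero]
  rw [integral_add (by fun_prop) (by fun_prop), integral_add (by fun_prop) (by fun_prop),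
    integral_add (by fun_prop) (by fun_prop), integral_add (by fun_prop) (by fun_prop),
    integral_add (by fun_prop) (by fun_prop), integral_add (by fun_prop) (by fun_prop)]
  simp only [hmean, integral_const_mul, integral_pow_add_two_gaussianReal v, pow_one, pow_zero,
    integral_id_gaussianReal, integral_const, probReal_univ, smul_eq_mul]
  push_cast
  ring

variable (A B C : ℝ)

lemma integral_quadratic_gaussianReal :
    ∫ x, (A + B * x + C * x ^ 2) ∂gaussianReal 0 v = A + C * v := by
  simpa using integral_sextic_gaussianReal v A B C 0 0 0 0

lemma integral_quadratic_sq_gaussianReal :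
    ∫ x, (A + B * x + C * x ^ 2) ^ 2 ∂gaussianReal 0 v
      = (A + C * v) ^ 2 + B ^ 2 * v + 2 * (C * v) ^ 2 := by
  have hexpand (x : ℝ) : (A + B * x + C * x ^ 2) ^ 2 = A ^ 2 + 2 * A * B * x
      + (B ^ 2 + 2 * A * C) * x ^ 2 + 2 * B * C * x ^ 3 + C ^ 2 * x ^ 4
      + 0 * x ^ 5 + 0 * x ^ 6 := by
    ring
  simp only [hexpand, integral_sextic_gaussianReal]
  ring

lemma integral_quadratic_cube_gaussianReal :
    ∫ x, (A + B * x + C * x ^ 2) ^ 3 ∂gaussianReal 0 v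
      = A ^ 3 + 3 * A ^ 2 * C * v + 3 * A * B ^ 2 * v + 9 * A * C ^ 2 * v ^ 2
        + 9 * B ^ 2 * C * v ^ 2 + 15 * C ^ 3 * v ^ 3 := by
  have hexpand (x : ℝ) : (A + B * x + C * x ^ 2) ^ 3 = A ^ 3 + 3 * A ^ 2 * B * x
      + (3 * A ^ 2 * C + 3 * A * B ^ 2) * x ^ 2 + (6 * A * B * C + B ^ 3) * x ^ 3
      + (3 * A * C ^ 2 + 3 * B ^ 2 * C) * x ^ 4 + 3 * B * C ^ 2 * x ^ 5 + C ^ 3 * x ^ 6 := by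
    ring
  simp only [hexpand, integral_sextic_gaussianReal]
  ring

variable {A B C}

lemma integral_quadratic_cube_gaussianReal_le {a b c : ℝ} (hA : |A| ≤ a) (hB : |B| ≤ b)
    (hC₀ : 0 ≤ C) (hC : C ≤ c) :
    ∫ x, (A + B * x + C * x ^ 2) ^ 3 ∂gaussianReal 0 v
      ≤ a ^ 3 + 3 * a ^ 2 * c * v + 3 * a * b ^ 2 * v + 9 * a * c ^ 2 * v ^ 2
        + 9 * b ^ 2 * c * v ^ 2 + 15 * c ^ 3 * v ^ 3 := by
  have hA₀ : 0 ≤ a := (abs_nonneg A).trans hA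
  have hA₁ : A ≤ a := le_of_abs_le hA
  have hA₂ : A ^ 2 ≤ a ^ 2 := sq_le_sq' (neg_le_of_abs_le hA) hA₁
  have hA₃ : A ^ 3 ≤ a ^ 3 := (Odd.pow_le_pow (by decide)).mpr hA₁
  have hB₂ : B ^ 2 ≤ b ^ 2 := sq_le_sq' (neg_le_of_abs_le hB) (le_of_abs_le hB)
  rw [integral_quadratic_cube_gaussianReal]
  gcongr

end GaussianMoments

section OneStep

variable {E : Type*} [NormedAddCommGroup E] [InnerProductSpace ℝ E] {x e u v : E} {H Δ p : ℝ}

lemma norm_add_smul_add_smul_sq_sub_one (he : ‖e‖ = 1) (Δ z : ℝ) (u v : E) :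
    ‖e + Δ • u + z • v‖ ^ 2 - 1
      = (2 * Δ * ⟪e, u⟫ + Δ ^ 2 * ‖u‖ ^ 2) + (2 * ⟪e, v⟫ + 2 * Δ * ⟪u, v⟫) * z
        + ‖v‖ ^ 2 * z ^ 2 := by
  simp only [norm_add_sq_real, norm_smul, he, inner_add_left, real_inner_smul_left,
    real_inner_smul_right, mul_pow, Real.norm_eq_abs, sq_abs]
  ring

lemma pow_mul_le_pow_four_mul (hH : 1 ≤ H) (hΔ : 0 ≤ Δ) {n : ℕ} (hn : n ≤ 4) :
    H ^ n * Δ ≤ H ^ 4 * Δ :=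
  mul_le_mul_of_nonneg_right (pow_le_pow_right₀ hH hn) hΔ

lemma integral_norm_sq_sub_one_le (he : ‖e‖ = 1) (hu : ‖u‖ ≤ H) (hH : 1 ≤ H) (hΔ : 0 ≤ Δ) :
    ∫ z, (‖e + Δ • u + z • v‖ ^ 2 - 1) ∂gaussianReal 0 Δ.toNNReal
      ≤ Δ * (2 * ⟪e, u⟫ + ‖v‖ ^ 2 + H ^ 4 * Δ) := by
  have hdrift : ‖u‖ ^ 2 * Δ ≤ H ^ 4 * Δ :=
    calc ‖u‖ ^ 2 * Δ ≤ H ^ 2 * Δ := by gcongr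
      _ ≤ H ^ 4 * Δ := pow_mul_le_pow_four_mul hH hΔ (by norm_num)
  simp only [norm_add_smul_add_smul_sq_sub_one he, integral_quadratic_gaussianReal,
    Real.coe_toNNReal _ hΔ]
  linarith [mul_le_mul_of_nonneg_left hdrift hΔ]

lemma le_integral_norm_sq_sub_one_sq (he : ‖e‖ = 1) (hu : ‖u‖ ≤ H) (hv : ‖v‖ ≤ H) (hH : 1 ≤ H)
    (hΔ : 0 ≤ Δ) :
    Δ * (4 * ⟪e, v⟫ ^ 2 - 8 * (H ^ 4 * Δ))
      ≤ ∫ z, (‖e + Δ • u + z • v‖ ^ 2 - 1) ^ 2 ∂gaussianReal 0 Δ.toNNReal := by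
  have : 0 ≤ H := zero_le_one.trans hH
  have hcross : |⟪e, v⟫ * ⟪u, v⟫| ≤ H ^ 3 :=
    calc |⟪e, v⟫ * ⟪u, v⟫| = |⟪e, v⟫| * |⟪u, v⟫| := abs_mul _ _
      _ ≤ (‖e‖ * ‖v‖) * (‖u‖ * ‖v‖) := by gcongr <;> exact abs_real_inner_le_norm _ _
      _ ≤ (1 * H) * (H * H) := by rw [he]; gcongr
      _ = H ^ 3 := by ring
  have hcross' : -(H ^ 4 * Δ) ≤ Δ * (⟪e, v⟫ * ⟪u, v⟫) := by
    have := mul_le_mul_of_nonneg_left (neg_le_of_abs_le hcross) hΔ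
    linarith [pow_mul_le_pow_four_mul hH hΔ (n := 3) (by norm_num)]
  simp only [norm_add_smul_add_smul_sq_sub_one he, integral_quadratic_sq_gaussianReal,
    Real.coe_toNNReal _ hΔ]
  calc Δ * (4 * ⟪e, v⟫ ^ 2 - 8 * (H ^ 4 * Δ))
      ≤ Δ * (4 * ⟪e, v⟫ ^ 2 + 8 * (Δ * (⟪e, v⟫ * ⟪u, v⟫))) := by gcongr; linarith
    _ ≤ (2 * ⟪e, v⟫ + 2 * Δ * ⟪u, v⟫) ^ 2 * Δ := by
        linarith [show 0 ≤ Δ * (2 * Δ * ⟪u, v⟫) ^ 2 by positivity]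
    _ ≤ _ := by
        rw [add_right_comm]
        exact le_add_of_nonneg_left (by positivity)

lemma abs_two_mul_inner_add_sq_le (he : ‖e‖ = 1) (hu : ‖u‖ ≤ H) (hΔ : 0 ≤ Δ) (hHΔ : H * Δ ≤ 1) :
    |2 * Δ * ⟪e, u⟫ + Δ ^ 2 * ‖u‖ ^ 2| ≤ 3 * (H * Δ) := by
  have : 0 ≤ H := (norm_nonneg u).trans hu
  calc |2 * Δ * ⟪e, u⟫ + Δ ^ 2 * ‖u‖ ^ 2| ≤ |2 * Δ * ⟪e, u⟫| + |Δ ^ 2 * ‖u‖ ^ 2| :=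
        abs_add_le _ _
    _ = 2 * Δ * |⟪e, u⟫| + Δ ^ 2 * ‖u‖ ^ 2 := by
        rw [abs_mul, abs_of_nonneg (by positivity : 0 ≤ 2 * Δ),
          abs_of_nonneg (by positivity : 0 ≤ Δ ^ 2 * ‖u‖ ^ 2)]
    _ ≤ 2 * Δ * (‖e‖ * ‖u‖) + Δ ^ 2 * ‖u‖ ^ 2 := by gcongr; exact abs_real_inner_le_norm _ _
    _ ≤ 2 * Δ * (1 * H) + Δ ^ 2 * H ^ 2 := by rw [he]; gcongr
    _ = 2 * (H * Δ) + H * Δ * (H * Δ) := by ring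
    _ ≤ 2 * (H * Δ) + H * Δ * 1 := by gcongr
    _ = 3 * (H * Δ) := by ring

lemma abs_two_mul_inner_add_inner_le (he : ‖e‖ = 1) (hu : ‖u‖ ≤ H) (hv : ‖v‖ ≤ H) (hΔ : 0 ≤ Δ)
    (hHΔ : H * Δ ≤ 1) :
    |2 * ⟪e, v⟫ + 2 * Δ * ⟪u, v⟫| ≤ 4 * H := by
  have : 0 ≤ H := (norm_nonneg u).trans hu
  calc |2 * ⟪e, v⟫ + 2 * Δ * ⟪u, v⟫| ≤ |2 * ⟪e, v⟫| + |2 * Δ * ⟪u, v⟫| := abs_add_le _ _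
    _ = 2 * |⟪e, v⟫| + 2 * Δ * |⟪u, v⟫| := by
        rw [abs_mul, abs_mul, abs_two, abs_of_nonneg (by positivity : 0 ≤ 2 * Δ)]
    _ ≤ 2 * (‖e‖ * ‖v‖) + 2 * Δ * (‖u‖ * ‖v‖) := by
        gcongr <;> exact abs_real_inner_le_norm _ _
    _ ≤ 2 * (1 * H) + 2 * Δ * (H * H) := by rw [he]; gcongr
    _ = 2 * H + 2 * H * (H * Δ) := by ring
    _ ≤ 2 * H + 2 * H * 1 := by gcongr
    _ = 4 * H := by ring

lemma integral_norm_sq_sub_one_cube_le (he : ‖e‖ = 1) (hu : ‖u‖ ≤ H) (hv : ‖v‖ ≤ H) (hH : 1 ≤ H)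
    (hΔ : 0 ≤ Δ) (hHΔ : H ^ 4 * Δ ≤ 1) :
    ∫ z, (‖e + Δ • u + z • v‖ ^ 2 - 1) ^ 3 ∂gaussianReal 0 Δ.toNNReal
      ≤ Δ * (384 * (H ^ 4 * Δ)) := by
  have hmono (n : ℕ) (hn : n ≤ 4) : H ^ n * Δ ≤ H ^ 4 * Δ := pow_mul_le_pow_four_mul hH hΔ hn
  have hprod (m n : ℕ) (hm : m ≤ 4) (hn : n ≤ 4) : (H ^ m * Δ) * (H ^ n * Δ) ≤ H ^ 4 * Δ :=
    (mul_le_of_le_one_right (by positivity) ((hmono n hn).trans hHΔ)).trans (hmono m hm)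
  have hHΔ₁ : H * Δ ≤ 1 := by simpa using (hmono 1 (by norm_num)).trans hHΔ
  simp only [norm_add_smul_add_smul_sq_sub_one he]
  refine (integral_quadratic_cube_gaussianReal_le _ (abs_two_mul_inner_add_sq_le he hu hΔ hHΔ₁)
    (abs_two_mul_inner_add_inner_le he hu hv hΔ hHΔ₁) (by positivity)
    (pow_le_pow_left₀ (norm_nonneg v) hv 2)).trans ?_
  rw [Real.coe_toNNReal _ hΔ]
  calc _ = Δ * (27 * ((H ^ 1 * Δ) * (H ^ 2 * Δ)) + 27 * ((H ^ 2 * Δ) * (H ^ 2 * Δ))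
          + 144 * (H ^ 3 * Δ) + 27 * ((H ^ 2 * Δ) * (H ^ 3 * Δ)) + 144 * (H ^ 4 * Δ)
          + 15 * ((H ^ 3 * Δ) * (H ^ 3 * Δ))) := by ring
    _ ≤ Δ * (384 * (H ^ 4 * Δ)) := mul_le_mul_of_nonneg_left
        (by linarith [hprod 1 2 (by norm_num) (by norm_num), hprod 2 2 (by norm_num) (by norm_num),
          hprod 2 3 (by norm_num) (by norm_num), hprod 3 3 (by norm_num) (by norm_num),
          hmono 3 (by norm_num)]) hΔ

lemma integrable_norm_sq_sub_one_pow (he : ‖e‖ = 1) (w : NNReal) (n : ℕ) :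
    Integrable (fun z : ℝ => (‖e + Δ • u + z • v‖ ^ 2 - 1) ^ n) (gaussianReal 0 w) := by
  simp only [norm_add_smul_add_smul_sq_sub_one he]
  exact integrable_quadratic_pow_gaussianReal _ _ _ _ n

lemma cubic_taylor_moments_le {m₁ m₂ m₃ a b c s : ℝ} (hp₀ : 0 ≤ p) (hp₂ : p ≤ 2) (hΔ : 0 ≤ Δ)
    (hs : 0 ≤ s) (h₁ : m₁ ≤ Δ * (2 * a + b + s)) (h₂ : Δ * (4 * c - 8 * s) ≤ m₂)
    (h₃ : m₃ ≤ Δ * (384 * s)) :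
    1 + p / 2 * m₁ + p / 2 * (p / 2 - 1) / 2 * m₂ + p / 2 * (p / 2 - 1) * (p / 2 - 2) / 6 * m₃
      ≤ 1 + p * Δ * (a + b / 2 + (p - 2) / 2 * c + 70 * s) := by
  have hpΔ : 0 ≤ p * Δ * s := by positivity
  have k₁ := mul_le_mul_of_nonneg_left h₁ (by linarith : 0 ≤ p / 2)
  have k₂ := mul_le_mul_of_nonneg_left h₂ (by nlinarith : 0 ≤ p / 2 * (1 - p / 2) / 2)
  have hc₃ : 0 ≤ p / 2 * (p / 2 - 1) * (p / 2 - 2) / 6 := by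
    have : 0 ≤ (2 - p) * (4 - p) := mul_nonneg (by linarith) (by linarith)
    nlinarith [mul_nonneg hp₀ this]
  have k₃ := mul_le_mul_of_nonneg_left h₃ hc₃
  have k₄ : 0 ≤ p * Δ * s * p := by positivity
  have k₅ : 0 ≤ p * Δ * s * (2 - p) := mul_nonneg hpΔ (by linarith)
  nlinarith

lemma lintegral_enorm_rpow_le_of_norm_eq_one (he : ‖e‖ = 1) (hu : ‖u‖ ≤ H) (hv : ‖v‖ ≤ H)
    (hH : 1 ≤ H) (hΔ : 0 ≤ Δ) (hHΔ : H ^ 4 * Δ ≤ 1) (hp₀ : 0 ≤ p) (hp₂ : p ≤ 2) :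
    ∫⁻ z, ‖e + Δ • u + z • v‖ₑ ^ p ∂gaussianReal 0 Δ.toNNReal
      ≤ ENNReal.ofReal (1 + p * Δ * (⟪e, u⟫ + ‖v‖ ^ 2 / 2 + (p - 2) / 2 * ⟪e, v⟫ ^ 2
          + 70 * (H ^ 4 * Δ))) := by
  have htaylor (z : ℝ) := rpow_le_cubic_taylor_sq hp₀ hp₂ (norm_nonneg (e + Δ • u + z • v))
  have hint := integrable_norm_sq_sub_one_pow (u := u) (v := v) (Δ := Δ) he Δ.toNNReal
  have hint₁ : Integrable (fun z : ℝ => ‖e + Δ • u + z • v‖ ^ 2 - 1)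
      (gaussianReal 0 Δ.toNNReal) := by
    simpa using hint 1
  simp_rw [← ofReal_norm, ENNReal.ofReal_rpow_of_nonneg (norm_nonneg _) hp₀]
  refine (lintegral_mono fun z => ENNReal.ofReal_le_ofReal (htaylor z)).trans ?_
  rw [← ofReal_integral_eq_lintegral_ofReal (by fun_prop)
    (ae_of_all _ fun z => (Real.rpow_nonneg (norm_nonneg _) p).trans (htaylor z))]
  refine ENNReal.ofReal_le_ofReal ?_
  rw [integral_add (by fun_prop) (by fun_prop), integral_add (by fun_prop) (by fun_prop),
    integral_add (by fun_prop) (by fun_prop)]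
  simp only [integral_const_mul, integral_const, probReal_univ, one_smul]
  exact cubic_taylor_moments_le hp₀ hp₂ hΔ (by positivity)
    (integral_norm_sq_sub_one_le he hu hH hΔ) (le_integral_norm_sq_sub_one_sq he hu hv hH hΔ)
    (integral_norm_sq_sub_one_cube_le he hu hv hH hΔ hHΔ)

lemma lintegral_enorm_rpow_le {lam : ℝ} (hu : ‖u‖ ≤ H * ‖x‖) (hv : ‖v‖ ≤ H * ‖x‖)
    (hH : 1 ≤ H) (hΔ : 0 ≤ Δ) (hHΔ : H ^ 4 * Δ ≤ 1) (hp₀ : 0 < p) (hp₂ : p ≤ 2)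
    (hdiss : ‖x‖ ^ 2 * (⟪x, u⟫ + ‖v‖ ^ 2 / 2) + (p - 2) / 2 * ⟪x, v⟫ ^ 2 ≤ -lam * ‖x‖ ^ 4) :
    ∫⁻ z, ‖x + Δ • u + z • v‖ₑ ^ p ∂gaussianReal 0 Δ.toNNReal
      ≤ ENNReal.ofReal (1 - p * Δ * (lam - 70 * (H ^ 4 * Δ))) * ‖x‖ₑ ^ p := by
  rcases eq_or_ne x 0 with rfl | hx
  · obtain rfl : u = 0 := by simpa using hu
    obtain rfl : v = 0 := by simpa using hv
    simp [hp₀]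
  have hr : 0 < ‖x‖ := norm_pos_iff.mpr hx
  have hunit : ‖‖x‖⁻¹ • x‖ = 1 := by simp [norm_smul, hr.ne']
  have hnorm {w : E} (hw : ‖w‖ ≤ H * ‖x‖) : ‖‖x‖⁻¹ • w‖ ≤ H := by
    rw [norm_smul, norm_inv, norm_norm, inv_mul_le_iff₀ hr, mul_comm]
    exact hw
  have hscale (z : ℝ) : ‖x + Δ • u + z • v‖ₑ ^ p
      = ‖x‖ₑ ^ p * ‖‖x‖⁻¹ • x + Δ • ‖x‖⁻¹ • u + z • ‖x‖⁻¹ • v‖ₑ ^ p := by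
    rw [← ENNReal.mul_rpow_of_nonneg _ _ hp₀.le, ← enorm_norm x, ← enorm_smul, smul_add, smul_add,
      smul_comm ‖x‖ Δ, smul_comm ‖x‖ z]
    simp only [smul_inv_smul₀ hr.ne']
  simp_rw [hscale]
  rw [lintegral_const_mul' _ _ (by finiteness), mul_comm]
  gcongr
  refine (lintegral_enorm_rpow_le_of_norm_eq_one hunit (hnorm hu) (hnorm hv)
    hH hΔ hHΔ hp₀.le hp₂).trans (ENNReal.ofReal_le_ofReal ?_)
  have hdiss' : ⟪‖x‖⁻¹ • x, ‖x‖⁻¹ • u⟫ + ‖‖x‖⁻¹ • v‖ ^ 2 / 2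
      + (p - 2) / 2 * ⟪‖x‖⁻¹ • x, ‖x‖⁻¹ • v⟫ ^ 2 ≤ -lam := by
    refine le_trans (le_of_eq ?_) ((div_le_iff₀ (by positivity)).mpr hdiss)
    simp only [real_inner_smul_left, real_inner_smul_right, norm_smul, norm_inv, norm_norm]
    field_simp
  have := mul_le_mul_of_nonneg_left hdiss' (by positivity : 0 ≤ p * Δ)
  linarith

end OneStep

section RandomRecursion

variable {Ω S F : Type*} [MeasurableSpace S] [mF : MeasurableSpace F] {ξ : ℕ → Ω → F}
  {X : ℕ → Ω → S} {T : S × F → S} {x₀ : S}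

lemma measurable_iSup_comap_of_recursion (hT : Measurable T) (h0 : ∀ ω, X 0 ω = x₀)
    (hX : ∀ k ω, X (k + 1) ω = T (X k ω, ξ k ω)) (k : ℕ) :
    Measurable[⨆ j ∈ Iio k, mF.comap (ξ j)] (X k) := by
  induction k with
  | zero => exact (funext h0 : X 0 = fun _ => x₀) ▸ measurable_const
  | succ k ih =>
    have hmono : (⨆ j ∈ Iio k, mF.comap (ξ j)) ≤ ⨆ j ∈ Iio (k + 1), mF.comap (ξ j) :=
      biSup_mono fun j hj => hj.trans k.lt_succ_self
    have hnoise : mF.comap (ξ k) ≤ ⨆ j ∈ Iio (k + 1), mF.comap (ξ j) :=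
      le_biSup (fun j => mF.comap (ξ j)) (mem_Iio.mpr k.lt_succ_self)
    rw [funext (hX k)]
    exact hT.comp ((ih.mono hmono le_rfl).prodMk ((comap_measurable (ξ k)).mono hnoise le_rfl))

variable [MeasurableSpace Ω] {P : Measure Ω}

lemma measurable_of_recursion (hξ : ∀ k, Measurable (ξ k)) (hT : Measurable T)
    (h0 : ∀ ω, X 0 ω = x₀) (hX : ∀ k ω, X (k + 1) ω = T (X k ω, ξ k ω)) (k : ℕ) :
    Measurable (X k) :=
  (measurable_iSup_comap_of_recursion hT h0 hX k).mono
    (iSup₂_le fun j _ => (hξ j).comap_le) le_rfl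

lemma indepFun_of_recursion (hξ : ∀ k, Measurable (ξ k)) (hind : iIndepFun ξ P)
    (hT : Measurable T) (h0 : ∀ ω, X 0 ω = x₀)
    (hX : ∀ k ω, X (k + 1) ω = T (X k ω, ξ k ω)) (k : ℕ) :
    IndepFun (X k) (ξ k) P := by
  have hpast : Indep (⨆ j ∈ Iio k, mF.comap (ξ j)) (⨆ j ∈ ({k} : Set ℕ), mF.comap (ξ j)) P :=
    indep_iSup_of_disjoint (fun j => (hξ j).comap_le) hind (by simp)
  rw [IndepFun_iff_Indep]
  exact indep_of_indep_of_le_left (indep_of_indep_of_le_right hpast (by simp))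
    (measurable_iSup_comap_of_recursion hT h0 hX k).comap_le

lemma lintegral_prodMk_le_of_indepFun [IsFiniteMeasure P] {Y : Ω → S} {Z : Ω → F}
    (hY : Measurable Y) (hZ : Measurable Z) (hYZ : IndepFun Y Z P) {ψ : S × F → ℝ≥0∞}
    (hψ : Measurable ψ) {φ : S → ℝ≥0∞} (hφ : Measurable φ) {c : ℝ≥0∞}
    (hle : ∀ y, ∫⁻ z, ψ (y, z) ∂P.map Z ≤ c * φ y) :
    ∫⁻ ω, ψ (Y ω, Z ω) ∂P ≤ c * ∫⁻ ω, φ (Y ω) ∂P :=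
  calc ∫⁻ ω, ψ (Y ω, Z ω) ∂P = ∫⁻ q, ψ q ∂(P.map Y).prod (P.map Z) := by
        rw [← (indepFun_iff_map_prod_eq_prod_map_map hY.aemeasurable hZ.aemeasurable).mp hYZ,
          lintegral_map hψ (hY.prodMk hZ)]
    _ = ∫⁻ y, ∫⁻ z, ψ (y, z) ∂P.map Z ∂P.map Y := lintegral_prod _ hψ.aemeasurable
    _ ≤ ∫⁻ y, c * φ y ∂P.map Y := lintegral_mono hle
    _ = c * ∫⁻ ω, φ (Y ω) ∂P := by rw [lintegral_const_mul _ hφ, lintegral_map hφ hY]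

lemma lintegral_recursion_le_pow_mul [IsProbabilityMeasure P] {ν : Measure F}
    (hξ : ∀ k, Measurable (ξ k)) (hind : iIndepFun ξ P) (hν : ∀ k, P.map (ξ k) = ν)
    (hT : Measurable T) (h0 : ∀ ω, X 0 ω = x₀) (hX : ∀ k ω, X (k + 1) ω = T (X k ω, ξ k ω))
    {V : S → ℝ≥0∞} (hV : Measurable V) {c : ℝ≥0∞}
    (hstep : ∀ x, ∫⁻ z, V (T (x, z)) ∂ν ≤ c * V x) (k : ℕ) :
    ∫⁻ ω, V (X k ω) ∂P ≤ c ^ k * V x₀ := by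
  induction k with
  | zero => simp [h0]
  | succ k ih =>
    simp only [hX]
    calc ∫⁻ ω, V (T (X k ω, ξ k ω)) ∂P ≤ c * ∫⁻ ω, V (X k ω) ∂P :=
          lintegral_prodMk_le_of_indepFun (ψ := V ∘ T) (measurable_of_recursion hξ hT h0 hX k)
            (hξ k) (indepFun_of_recursion hξ hind hT h0 hX k) (hV.comp hT) hV
            (by simpa only [hν k, Function.comp_apply] using hstep)
      _ ≤ c * (c ^ k * V x₀) := by gcongr
      _ = c ^ (k + 1) * V x₀ := by rw [pow_succ', mul_assoc]

end RandomRecursion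

section AlmostSureDecay

variable {Ω : Type*} [MeasurableSpace Ω] {P : Measure Ω} {Y : ℕ → Ω → ℝ≥0∞}

lemma ae_tendsto_zero_of_tsum_lintegral_ne_top (hY : ∀ k, Measurable (Y k))
    (hsum : ∑' k, ∫⁻ ω, Y k ω ∂P ≠ ⊤) :
    ∀ᵐ ω ∂P, Tendsto (fun k => Y k ω) atTop (nhds 0) := by
  rw [← lintegral_tsum fun k => (hY k).aemeasurable] at hsum
  filter_upwards [ae_lt_top (Measurable.tsum hY) hsum] with ω hω
  exact ENNReal.tendsto_atTop_zero_of_tsum_ne_top hω.ne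

lemma ae_eventually_le_pow_of_lintegral_rpow_le (hY : ∀ k, Measurable (Y k)) {p : ℝ} (hp : 0 < p)
    {b c M : ℝ≥0∞} (hM : M ≠ ⊤) (hb : b ≠ ⊤) (hcb : c < b ^ p)
    (hle : ∀ k, ∫⁻ ω, Y k ω ^ p ∂P ≤ c ^ k * M) :
    ∀ᵐ ω ∂P, ∀ᶠ k in atTop, Y k ω ≤ b ^ k := by
  have hbp₀ : b ^ p ≠ 0 := (bot_le.trans_lt hcb).ne'
  have hbp : b ^ p ≠ ⊤ := ENNReal.rpow_ne_top_of_nonneg hp.le hb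
  have hnormalized (k : ℕ) : ∫⁻ ω, Y k ω ^ p / (b ^ p) ^ k ∂P ≤ (c / b ^ p) ^ k * M := by
    simp only [div_eq_mul_inv, mul_pow, ENNReal.inv_pow]
    rw [lintegral_mul_const _ ((hY k).pow_const p), mul_right_comm]
    gcongr
    exact hle k
  have hsum : ∑' k, ∫⁻ ω, Y k ω ^ p / (b ^ p) ^ k ∂P ≠ ⊤ := by
    refine ne_top_of_le_ne_top ?_ (ENNReal.tsum_le_tsum hnormalized)
    rw [ENNReal.tsum_mul_right, ENNReal.tsum_geometric]
    refine ENNReal.mul_ne_top (ENNReal.inv_ne_top.mpr (tsub_pos_of_lt ?_).ne') hM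
    rwa [ENNReal.div_lt_iff (.inl hbp₀) (.inl hbp), one_mul]
  filter_upwards [ae_tendsto_zero_of_tsum_lintegral_ne_top
    (fun k => ((hY k).pow_const p).div_const _) hsum] with ω hω
  filter_upwards [hω.eventually (gt_mem_nhds one_pos)] with k hk
  rw [ENNReal.div_lt_iff (.inl (pow_ne_zero k hbp₀)) (.inl (ENNReal.pow_ne_top hbp)), one_mul,
    ← ENNReal.rpow_natCast, ← ENNReal.rpow_mul, mul_comm, ENNReal.rpow_mul,
    ENNReal.rpow_natCast] at hk
  exact (ENNReal.rpow_le_rpow_iff hp).mp hk.le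

lemma limsup_log_norm_div_le {E : Type*} [NormedAddCommGroup E] {x : ℕ → E}
    [DecidablePred fun k => x k = 0] {Δ κ : ℝ} (hΔ : 0 < Δ)
    (hx : ∀ᶠ k : ℕ in atTop, ‖x k‖ₑ ≤ ENNReal.ofReal (Real.exp (-κ * Δ)) ^ k) :
    limsup (fun k : ℕ => if x k = 0 then (⊥ : EReal)
      else ((Real.log ‖x k‖ / (k * Δ) : ℝ) : EReal)) atTop ≤ ((-κ : ℝ) : EReal) := by
  refine limsup_le_of_le (by isBoundedDefault) ?_
  filter_upwards [hx, eventually_gt_atTop 0] with k hk hk₀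
  split_ifs with hxk
  · exact bot_le
  have hnorm : ‖x k‖ ≤ Real.exp (k * (-κ * Δ)) := by
    rwa [← ENNReal.ofReal_pow (Real.exp_nonneg _), ← Real.exp_nat_mul, ← ofReal_norm,
      ENNReal.ofReal_le_ofReal_iff (Real.exp_nonneg _)] at hk
  rw [EReal.coe_le_coe_iff, div_le_iff₀ (by positivity),
    Real.log_le_iff_le_exp (norm_pos_iff.mpr hxk)]
  exact hnorm.trans_eq (congrArg Real.exp (by ring))

end AlmostSureDecay

section EulerScheme

variable {E : Type*} [NormedAddCommGroup E] [InnerProductSpace ℝ E]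

/-- One step of the Euler–Maruyama scheme with drift `F`, diffusion coefficient `G` and step size
`Δ`, as a function of the current state and the noise increment. -/
def eulerStep (F G : E → E) (Δ : ℝ) (q : E × ℝ) : E :=
  q.1 + Δ • F q.1 + q.2 • G q.1

/-- The dissipativity bound `Φ_{F,G} ≤ -lam` with the denominators of `Φ_{F,G}` cleared, so that
it holds trivially at the origin. -/
def IsDissipative (F G : E → E) (p lam : ℝ) : Prop :=
  ∀ x, ‖x‖ ^ 2 * (⟪x, F x⟫ + ‖G x‖ ^ 2 / 2) + (p - 2) / 2 * ⟪x, G x⟫ ^ 2 ≤ -lam * ‖x‖ ^ 4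

variable [MeasurableSpace E] [BorelSpace E] [SecondCountableTopology E] {F G : E → E}
  {Δ p lam H : ℝ}

lemma measurable_eulerStep (hF : Measurable F) (hG : Measurable G) (Δ : ℝ) :
    Measurable (eulerStep F G Δ) :=
  (measurable_fst.add ((hF.comp measurable_fst).const_smul Δ)).add
    (measurable_snd.smul (hG.comp measurable_fst))

lemma one_sub_rate_lt_exp_rpow {ε s : ℝ} (hΔ : 0 < Δ) (hp : 0 < p) (hs : s < ε) :
    ENNReal.ofReal (1 - p * Δ * (lam - s))
      < ENNReal.ofReal (Real.exp (-(lam - ε) * Δ)) ^ p := by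
  rw [ENNReal.ofReal_rpow_of_pos (Real.exp_pos _), ← Real.exp_mul,
    ENNReal.ofReal_lt_ofReal_iff (Real.exp_pos _)]
  calc 1 - p * Δ * (lam - s) ≤ Real.exp (-(p * Δ * (lam - s))) := Real.one_sub_le_exp_neg _
    _ < Real.exp (-(lam - ε) * Δ * p) := by
        rw [Real.exp_lt_exp]
        linarith [mul_lt_mul_of_pos_left hs (mul_pos hp hΔ)]

theorem ae_eventually_enorm_eulerScheme_le {ε : ℝ} (hF : Measurable F) (hG : Measurable G)
    (hFH : ∀ x, ‖F x‖ ≤ H * ‖x‖) (hGH : ∀ x, ‖G x‖ ≤ H * ‖x‖) (hH : 1 ≤ H)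
    (hp : p ∈ Ioc (0 : ℝ) 2) (hdiss : IsDissipative F G p lam) (hΔ : 0 < Δ)
    (hHΔ : H ^ 4 * Δ ≤ 1) (hε : 70 * (H ^ 4 * Δ) < ε) {Ω : Type*} [MeasurableSpace Ω]
    {P : Measure Ω} [IsProbabilityMeasure P] {ξ : ℕ → Ω → ℝ} (hξ : ∀ k, Measurable (ξ k))
    (hind : iIndepFun ξ P) (hν : ∀ k, P.map (ξ k) = gaussianReal 0 Δ.toNNReal) {x₀ : E}
    {X : ℕ → Ω → E} (h0 : ∀ ω, X 0 ω = x₀)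
    (hX : ∀ k ω, X (k + 1) ω = eulerStep F G Δ (X k ω, ξ k ω)) :
    ∀ᵐ ω ∂P, ∀ᶠ k in atTop, ‖X k ω‖ₑ ≤ ENNReal.ofReal (Real.exp (-(lam - ε) * Δ)) ^ k := by
  have hT : Measurable (eulerStep F G Δ) := measurable_eulerStep hF hG Δ
  have hstep (x : E) : ∫⁻ z, ‖eulerStep F G Δ (x, z)‖ₑ ^ p ∂gaussianReal 0 Δ.toNNReal
      ≤ ENNReal.ofReal (1 - p * Δ * (lam - 70 * (H ^ 4 * Δ))) * ‖x‖ₑ ^ p :=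
    lintegral_enorm_rpow_le (hFH x) (hGH x) hH hΔ.le hHΔ hp.1 hp.2 (hdiss x)
  have hmoment := lintegral_recursion_le_pow_mul hξ hind hν hT h0 hX
    (V := fun x => ‖x‖ₑ ^ p) (by fun_prop) hstep
  exact ae_eventually_le_pow_of_lintegral_rpow_le
    (fun k => (measurable_of_recursion hξ hT h0 hX k).enorm) hp.1
    (ENNReal.rpow_ne_top_of_nonneg hp.1.le enorm_ne_top) ENNReal.ofReal_ne_top
    (one_sub_rate_lt_exp_rpow hΔ hp.1 hε) hmoment

end EulerScheme

section Truncation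

variable {d : ℕ} {f g : EuclideanSpace ℝ (Fin d) → EuclideanSpace ℝ (Fin d)} {h H p lam : ℝ}

lemma exists_trunc_eq_smul (hh : 0 < h) (x : EuclideanSpace ℝ (Fin d)) :
    ∃ (c : ℝ) (y : EuclideanSpace ℝ (Fin d)), 0 < c ∧ ‖y‖ ≤ h ∧ x = c • y ∧
      ∀ f : EuclideanSpace ℝ (Fin d) → EuclideanSpace ℝ (Fin d), trunc f h x = c • f y := by
  by_cases hx : ‖x‖ ≤ h
  · exact ⟨1, x, one_pos, hx, (one_smul ℝ x).symm, fun f => by simp [trunc, hx]⟩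
  · have hx₀ : 0 < ‖x‖ := hh.trans (not_le.mp hx)
    refine ⟨‖x‖ / h, (h / ‖x‖) • x, by positivity, le_of_eq ?_, ?_, fun f => if_neg hx⟩
    · rw [norm_smul, Real.norm_of_nonneg (by positivity), div_mul_cancel₀ _ hx₀.ne']
    · rw [smul_smul, div_mul_div_cancel₀ hh.ne', div_self hx₀.ne', one_smul]

lemma norm_trunc_le (hh : 0 < h) (hf : ∀ x, ‖x‖ ≤ h → ‖f x‖ ≤ H * ‖x‖)
    (x : EuclideanSpace ℝ (Fin d)) : ‖trunc f h x‖ ≤ H * ‖x‖ := by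
  obtain ⟨c, y, -, hy, rfl, htrunc⟩ := exists_trunc_eq_smul hh x
  rw [htrunc, norm_smul, norm_smul, mul_left_comm]
  gcongr
  exact hf y hy

lemma measurable_trunc (hf : Measurable f) (h : ℝ) : Measurable (trunc f h) :=
  Measurable.ite (measurableSet_le measurable_norm measurable_const) hf (by fun_prop)

lemma isDissipative_of_Phi_le (hPhi : ∀ x, x ≠ 0 → Phi f g p x ≤ -lam) :
    IsDissipative f g p lam := by
  intro x
  rcases eq_or_ne x 0 with rfl | hx
  · simp
  have : 0 < ‖x‖ := norm_pos_iff.mpr hx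
  rw [← div_le_iff₀ (by positivity)]
  refine le_trans (le_of_eq ?_) (hPhi x hx)
  rw [Phi]
  field_simp

lemma IsDissipative.trunc (hfg : IsDissipative f g p lam) (hh : 0 < h) :
    IsDissipative (trunc f h) (trunc g h) p lam := by
  intro x
  obtain ⟨c, y, hc, -, rfl, htrunc⟩ := exists_trunc_eq_smul hh x
  simp only [htrunc, real_inner_smul_left, real_inner_smul_right, norm_smul,
    Real.norm_of_nonneg hc.le]
  linarith [mul_le_mul_of_nonneg_left (hfg y) (by positivity : 0 ≤ c ^ 4)]

end Truncation

lemma continuous_of_lipschitz_on_balls {E F : Type*} [SeminormedAddCommGroup E]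
    [SeminormedAddCommGroup F] {f : E → F} {L : ℝ → ℝ}
    (hf : ∀ R > (0 : ℝ), ∀ x y, ‖x‖ ≤ R → ‖y‖ ≤ R → ‖f x - f y‖ ≤ L R * ‖x - y‖) :
    Continuous f := by
  refine continuous_iff_continuousAt.mpr fun x => ?_
  refine continuousAt_of_locally_lipschitz one_pos (L (‖x‖ + 1)) fun y hy => ?_
  rw [dist_eq_norm, dist_eq_norm]
  rw [dist_eq_norm] at hy
  exact hf _ (by positivity) y x (by linarith [norm_le_insert' y x]) (by linarith)

lemma max_one_pow_four_le (a : ℝ) : max a 1 ^ 4 ≤ a ^ 4 + 1 := by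
  rcases max_choice a 1 with h | h <;> rw [h]
  · linarith
  · linarith [show 0 ≤ a ^ 4 by positivity]

lemma exists_forall_max_one_pow_four_mul_lt {ℓ : ℝ → ℝ} {Δ₀ δ : ℝ} (hΔ₀ : 0 < Δ₀) (hδ : 0 < δ)
    (hℓ : Tendsto (fun Δ => ℓ Δ ^ 4 * Δ) (nhdsWithin 0 (Ioc 0 Δ₀)) (nhds 0)) :
    ∃ Δs ∈ Ioc 0 Δ₀, ∀ Δ ∈ Ioo 0 Δs, max (ℓ Δ) 1 ^ 4 * Δ < δ := by
  rw [nhdsWithin_Ioc_eq_nhdsGT hΔ₀] at hℓ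
  have hlim : Tendsto (fun Δ => ℓ Δ ^ 4 * Δ + Δ) (nhdsWithin 0 (Ioi 0)) (nhds 0) := by
    simpa using hℓ.add (tendsto_id.mono_left nhdsWithin_le_nhds)
  obtain ⟨Δs, hΔs, hsub⟩ := (mem_nhdsGT_iff_exists_mem_Ioc_Ioo_subset hΔ₀).mp
    (hlim.eventually (gt_mem_nhds hδ))
  refine ⟨Δs, hΔs, fun Δ hΔ => lt_of_le_of_lt ?_ (hsub hΔ)⟩
  linarith [mul_le_mul_of_nonneg_right (max_one_pow_four_le (ℓ Δ)) hΔ.1.le]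

theorem stmt18_general {d : ℕ} {f g : EuclideanSpace ℝ (Fin d) → EuclideanSpace ℝ (Fin d)}
    (hf : Measurable f) (hg : Measurable g) {L : ℝ → ℝ}
    (hgrowth : ∀ R > (0 : ℝ), ∀ x, ‖x‖ ≤ R → ‖f x‖ ⊔ ‖g x‖ ≤ L R * ‖x‖)
    {p lam : ℝ} (hp : p ∈ Ioc (0 : ℝ) 2) (hPhi : ∀ x, x ≠ 0 → Phi f g p x ≤ -lam)
    {Δ₀ : ℝ} (hΔ₀ : 0 < Δ₀) {h : ℝ → ℝ} (hhpos : ∀ Δ ∈ Ioc 0 Δ₀, 0 < h Δ)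
    (hLh : Tendsto (fun Δ => L (h Δ) ^ 4 * Δ) (nhdsWithin 0 (Ioc 0 Δ₀)) (nhds 0))
    {ε : ℝ} (hε : 0 < ε) :
    ∃ Δs ∈ Ioc 0 Δ₀, ∀ Δ ∈ Ioo 0 Δs, ∀ (Ω : Type*) [MeasurableSpace Ω] (P : Measure Ω)
      [IsProbabilityMeasure P] (ξ : ℕ → Ω → ℝ), (∀ k, Measurable (ξ k)) → iIndepFun ξ P →
      (∀ k, P.map (ξ k) = gaussianReal 0 Δ.toNNReal) →
      ∀ (x₀ : EuclideanSpace ℝ (Fin d)) (X : ℕ → Ω → EuclideanSpace ℝ (Fin d)),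
      (∀ ω, X 0 ω = x₀) →
      (∀ k ω, X (k + 1) ω
          = X k ω + Δ • trunc f (h Δ) (X k ω) + ξ k ω • trunc g (h Δ) (X k ω)) →
      ∀ᵐ ω ∂P, limsup (fun k : ℕ => if X k ω = 0 then (⊥ : EReal)
        else ((Real.log ‖X k ω‖ / (k * Δ) : ℝ) : EReal)) atTop ≤ ((-(lam - ε) : ℝ) : EReal) := by
  have hδ : 0 < min 1 (ε / 70) := by positivity
  obtain ⟨Δs, hΔs, hsmall⟩ := exists_forall_max_one_pow_four_mul_lt hΔ₀ hδ hLh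
  refine ⟨Δs, hΔs, fun Δ hΔ Ω _ P _ ξ hξ hind hν x₀ X h0 hX => ?_⟩
  have hh : 0 < h Δ := hhpos Δ ⟨hΔ.1, hΔ.2.le.trans hΔs.2⟩
  obtain ⟨hle_one, hlt_ε⟩ := lt_min_iff.mp (hsmall Δ hΔ)
  rw [lt_div_iff₀' (by norm_num)] at hlt_ε
  have hgrowth' (x : EuclideanSpace ℝ (Fin d)) (hx : ‖x‖ ≤ h Δ) :
      ‖f x‖ ⊔ ‖g x‖ ≤ max (L (h Δ)) 1 * ‖x‖ :=
    (hgrowth _ hh x hx).trans (mul_le_mul_of_nonneg_right (le_max_left _ _) (norm_nonneg x))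
  have hdecay := ae_eventually_enorm_eulerScheme_le (measurable_trunc hf _) (measurable_trunc hg _)
    (norm_trunc_le hh fun x hx => le_sup_left.trans (hgrowth' x hx))
    (norm_trunc_le hh fun x hx => le_sup_right.trans (hgrowth' x hx)) (le_max_right _ _) hp
    ((isDissipative_of_Phi_le hPhi).trunc hh) hΔ.1 hle_one.le hlt_ε hξ hind hν h0 hX
  filter_upwards [hdecay] with ω hω
  exact limsup_log_norm_div_le hΔ.1 hω

theorem stmt18 {d : ℕ} (hd : 1 ≤ d)
    (f g : EuclideanSpace ℝ (Fin d) → EuclideanSpace ℝ (Fin d))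
    (hf0 : f 0 = 0) (hg0 : g 0 = 0)
    (L : ℝ → ℝ) (hLpos : ∀ R > (0:ℝ), 0 < L R) (hLmono : MonotoneOn L (Set.Ioi 0))
    (hlip : ∀ R > (0:ℝ), ∀ x y : EuclideanSpace ℝ (Fin d), ‖x‖ ≤ R → ‖y‖ ≤ R →
      ‖f x - f y‖ ⊔ ‖g x - g y‖ ≤ L R * ‖x - y‖)
    (p lam : ℝ) (hp : p ∈ Set.Ioo (0:ℝ) 1) (hlam : 0 < lam)
    (hPhi : ∀ x : EuclideanSpace ℝ (Fin d), x ≠ 0 → Phi f g p x ≤ -lam)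
    (Δ₀ : ℝ) (hΔ₀ : 0 < Δ₀) (h : ℝ → ℝ)
    (hhpos : ∀ Δ ∈ Set.Ioc (0:ℝ) Δ₀, 0 < h Δ)
    (hhdec : AntitoneOn h (Set.Ioc 0 Δ₀))
    (hhinf : Tendsto h (nhdsWithin 0 (Set.Ioc 0 Δ₀)) atTop)
    (hLh : Tendsto (fun Δ => L (h Δ) ^ 4 * Δ) (nhdsWithin 0 (Set.Ioc 0 Δ₀)) (nhds 0)) :
    ∀ ε ∈ Set.Ioo 0 lam, ∃ Δs ∈ Set.Ioc (0:ℝ) Δ₀, ∀ Δ ∈ Set.Ioo (0:ℝ) Δs,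
      ∀ (Ω : Type) [MeasurableSpace Ω] (P : Measure Ω) [IsProbabilityMeasure P]
        (ξ : ℕ → Ω → ℝ), (∀ k, Measurable (ξ k)) →
        iIndepFun (m := fun _ => Real.measurableSpace) ξ P →
        (∀ k, Measure.map (ξ k) P = gaussianReal 0 (Real.toNNReal Δ)) →
        ∀ (x₀ : EuclideanSpace ℝ (Fin d)) (X : ℕ → Ω → EuclideanSpace ℝ (Fin d)),
        (∀ ω, X 0 ω = x₀) →
        (∀ k ω, X (k + 1) ω
            = X k ω + Δ • trunc f (h Δ) (X k ω) + ξ k ω • trunc g (h Δ) (X k ω)) →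
        ∀ᵐ ω ∂P,
          Filter.limsup
              (fun k : ℕ => if X k ω = 0 then (⊥ : EReal)
                else ((Real.log ‖X k ω‖ / (k * Δ) : ℝ) : EReal)) Filter.atTop
            ≤ ((-(lam - ε) : ℝ) : EReal) := by
  exact fun ε hε => stmt18_general
    (continuous_of_lipschitz_on_balls fun R hR x y hx hy =>
      le_sup_left.trans (hlip R hR x y hx hy)).measurable
    (continuous_of_lipschitz_on_balls fun R hR x y hx hy =>
      le_sup_right.trans (hlip R hR x y hx hy)).measurable
    (fun R hR x hx => by simpa [hf0, hg0] using hlip R hR x 0 hx (by simpa using hR.le))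
    ⟨hp.1, hp.2.le.trans one_le_two⟩ hPhi hΔ₀ hhpos hLh hε.1
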